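/- Let S be a standard ℕⁿ-graded k-algebra with diagonal subring S^Δ of dimension d. If S admits a complete reduction of type r, then r ≥ d; and if r = d, then with X_j = ∏ᵢ x_{ij}, the elements X₁,...,X_d are algebraically independent over k and k[X₁,...,X_d] ⊆ S^Δ is a graded Noether normalization of S^Δ. -/

import Mathlib

/-- Incomparability: dimension does not go up along finite ring maps. -/
theorem ringKrullDim_le_of_finite_aux {A B : Type*} [CommRing A] [CommRing B] (f : A →+* B)
    (hf : f.Finite) : ringKrullDim B ≤ ringKrullDim A := by
  algebraize [f]
  refine Order.krullDim_le_of_strictMono (PrimeSpectrum.comap f) ?_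
  intro p q hpq
  exact Ideal.IsIntegral.comap_lt_comap (R := A) (I := p.asIdeal) (J := q.asIdeal) hpq



/-- A complete reduction of type `r` of a standard `ℕⁿ`-graded `k`-algebra `S`
(with grading `𝒜`): an `n × r` matrix `{x_{ij}}` with `x_{ij} ∈ S^{(i)}`
(the degree-`eᵢ` component) such that, with `X_j = ∏ᵢ x_{ij}`, the diagonal
subring `S^Δ = k[S_{(1,…,1)}]` is a finite module over `k[X₁, …, X_r]`. -/
def IsCompleteReduction (k : Type*) {S : Type*} [Field k] [CommRing S]
    [Algebra k S] {n : ℕ} (𝒜 : (Fin n → ℕ) → Submodule k S) {r : ℕ}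
    (x : Fin n → Fin r → S) : Prop :=
  (∀ i j, x i j ∈ 𝒜 (Pi.single i 1)) ∧
  ∃ h : Algebra.adjoin k (Set.range fun j => ∏ i, x i j) ≤
      Algebra.adjoin k (𝒜 (fun _ => 1) : Set S),
    (Subalgebra.inclusion h).toRingHom.Finite

/-- If a standard `ℕⁿ`-graded algebra `S` with `d = dim S^Δ` admits a complete
reduction of type `r`, then `r ≥ d`; and if `r = d`, then the column products
`X₁, …, X_d` are algebraically independent over `k` and `k[X₁,…,X_d] ⊆ S^Δ` is
a graded Noether normalization of `S^Δ`. -/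
theorem complete_reduction_type_ge_dim (k S : Type*) [Field k] [CommRing S]
    [Algebra k S] (n : ℕ) (𝒜 : (Fin n → ℕ) → Submodule k S) [GradedAlgebra 𝒜]
    (hfg : Algebra.FiniteType k S) (h0 : 𝒜 0 = 1)
    (hstd : Algebra.adjoin k (⋃ i, (𝒜 (Pi.single i 1) : Set S)) = ⊤)
    (d : ℕ)
    (hdim : ringKrullDim ↥(Algebra.adjoin k (𝒜 (fun _ => 1) : Set S)) = d)
    (r : ℕ) (x : Fin n → Fin r → S) (hx : IsCompleteReduction k 𝒜 x) :
    d ≤ r ∧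
    (r = d →
      AlgebraicIndependent k (fun j => ∏ i, x i j) ∧
      ∃ h : Algebra.adjoin k (Set.range fun j => ∏ i, x i j) ≤
          Algebra.adjoin k (𝒜 (fun _ => 1) : Set S),
        (Subalgebra.inclusion h).toRingHom.Finite) := by
  obtain ⟨_, h, hfin⟩ := hx
  have h1 := ringKrullDim_le_of_finite_aux _ hfin
  rw [hdim] at h1
  let X : Fin r → S := fun j => ∏ i, x i j
  have hX : Algebra.adjoin k (Set.range X) = (MvPolynomial.aeval (R := k) X).range :=
    Algebra.adjoin_range_eq_range_aeval k X
  change (d : WithBot ℕ∞) ≤ ringKrullDim ↥(Algebra.adjoin k (Set.range X)) at h1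
  rw [hX] at h1
  have hsurj := (MvPolynomial.aeval (R := k) X).rangeRestrict_surjective
  have h2 : ringKrullDim (MvPolynomial (Fin r) k) = r := by
    simp
  have h3 := ringKrullDim_le_of_surjective
    (MvPolynomial.aeval (R := k) X).rangeRestrict.toRingHom hsurj
  rw [h2] at h3
  refine ⟨by exact_mod_cast h1.trans h3, fun hrd => ⟨?_, h, hfin⟩⟩
  change AlgebraicIndependent k X
  rw [algebraicIndependent_iff]
  intro p hp
  by_contra hp0
  have h4 := ringKrullDim_succ_le_of_surjective
    (MvPolynomial.aeval (R := k) X).rangeRestrict.toRingHom hsurj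
    (mem_nonZeroDivisors_of_ne_zero hp0) (Subtype.ext hp)
  rw [h2] at h4
  have h5 : (d : WithBot ℕ∞) + 1 ≤ r := le_trans (by gcongr) h4
  have h6 : d + 1 ≤ r := by exact_mod_cast h5
  omega
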